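/- arXiv:0802.2928 — 2 statements merged into one kernel-verified Lean document; each statement's English description precedes it below -/
import Mathlib

section
/- For every prime p, the set P = {n ∈ ℕ₀ : p ∤ n} of non-negative integers not divisible by p is an essentiality of the asymptotic basis A = ℕ₀ (which is an asymptotic basis of order 1): ℕ₀ \ P is not an asymptotic basis of any order, and P is minimal with respect to inclusion among subsets of ℕ₀ with this property. -/
/-!
Sums of multiples of `p` are multiples of `p`, so the multiples of `p` miss the infinitely many
numbers `≡ 1 (mod p)` and form no asymptotic basis. Conversely, adding a single `a` with `p ∤ a`
to the multiples of `p` yields an asymptotic basis of order `p`: as `a` is invertible mod `p`, every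
`n ≥ p * a` satisfies `n ≡ k * a (mod p)` for some `k < p`, and `n` is then the sum of `k` copies
of `a`, the multiple `n - k * a` of `p`, and `p - 1 - k` zeros. A proper subset `Q` of the
non-multiples of `p` leaves such an `a` in its complement, which gives minimality.
-/

/-- The `h`-fold sumset of `A ⊆ ℕ`: all sums of `h`-tuples of elements of `A`. -/
def Sumset (A : Set ℕ) (h : ℕ) : Set ℕ :=
  {n | ∃ l : List ℕ, l.length = h ∧ (∀ x ∈ l, x ∈ A) ∧ l.sum = n}

/-- `A` is an asymptotic basis for `ℕ` of order `h`. -/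
def IsBasisOfOrder (A : Set ℕ) (h : ℕ) : Prop :=
  0 ∈ A ∧ 1 ≤ h ∧ (Sumset A h)ᶜ.Finite

/-- `A` is an asymptotic basis for `ℕ` of some order. -/
def IsBasis (A : Set ℕ) : Prop := ∃ h, IsBasisOfOrder A h

/-- `P` is an essentiality of `A`: `A \ P` is not an asymptotic basis of any order,
and `P` is minimal (w.r.t. inclusion) among subsets of `A` with this property. -/
def IsEssentiality (A P : Set ℕ) : Prop :=
  P ⊆ A ∧ ¬ IsBasis (A \ P) ∧ ∀ Q ⊆ P, ¬ IsBasis (A \ Q) → Q = P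

/-- An essential subset is a finite essentiality. -/
def IsEssentialSubset (A P : Set ℕ) : Prop :=
  IsEssentiality A P ∧ P.Finite

lemma not_isBasis_of_dvd {p : ℕ} (hp : p.Prime) {B : Set ℕ} (hB : ∀ x ∈ B, p ∣ x) :
    ¬ IsBasis B := by
  rintro ⟨h, -, -, hfin⟩
  refine Set.infinite_of_injective_forall_mem (f := fun m : ℕ => p * m + 1) ?_ ?_ hfin
  · intro x y hxy
    exact Nat.eq_of_mul_eq_mul_left hp.pos (Nat.succ_injective hxy)
  · rintro m ⟨l, -, hl, hsum⟩
    have hd : p ∣ p * m + 1 := hsum ▸ List.dvd_sum fun x hx => hB x (hl x hx)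
    exact hp.one_lt.ne' (Nat.dvd_one.mp ((Nat.dvd_add_right (dvd_mul_right p m)).mp hd))

lemma isBasis_of_dvd_of_mem {p : ℕ} (hp : p.Prime) {B : Set ℕ} (hB : ∀ x, p ∣ x → x ∈ B)
    {a : ℕ} (ha : a ∈ B) (hpa : ¬ p ∣ a) : IsBasis B := by
  have : Fact p.Prime := ⟨hp⟩
  refine ⟨p, hB 0 (dvd_zero p), hp.one_le, (Set.finite_lt_nat (p * a)).subset fun n hn => ?_⟩
  by_contra hlt
  have hle : p * a ≤ n := not_lt.mp hlt
  refine hn ?_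
  have ha0 : (a : ZMod p) ≠ 0 := fun h => hpa ((ZMod.natCast_eq_zero_iff a p).mp h)
  obtain ⟨k, hk, hkn⟩ : ∃ k < p, k * a ≡ n [MOD p] := by
    refine ⟨((n : ZMod p) * (a : ZMod p)⁻¹).val, ZMod.val_lt _, ?_⟩
    rw [← ZMod.natCast_eq_natCast_iff]
    simp [ha0]
  have hka : k * a ≤ n := (Nat.mul_le_mul_right a hk.le).trans hle
  have hd : p ∣ n - k * a := (Nat.modEq_iff_dvd' hka).mp hkn
  refine ⟨List.replicate k a ++ (n - k * a) :: List.replicate (p - 1 - k) 0, ?_, ?_, ?_⟩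
  · simp only [List.length_append, List.length_cons, List.length_replicate]
    omega
  · intro x hx
    simp only [List.mem_append, List.mem_cons, List.mem_replicate] at hx
    rcases hx with ⟨-, rfl⟩ | rfl | ⟨-, rfl⟩
    · exact ha
    · exact hB _ hd
    · exact hB _ (dvd_zero p)
  · simp only [List.sum_append, List.sum_cons, List.sum_replicate, smul_eq_mul, mul_zero]
    omega

/-- For every prime `p`, the set of naturals not divisible by `p` is an essentiality of
the basis `ℕ` (which is a basis of order 1). -/
theorem non_multiples_essentiality (p : ℕ) (hp : p.Prime) :
    IsBasisOfOrder Set.univ 1 ∧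
      IsEssentiality (Set.univ : Set ℕ) {n : ℕ | ¬ p ∣ n} := by
  refine ⟨⟨Set.mem_univ 0, le_rfl, Set.finite_empty.subset fun n hn => ?_⟩,
    Set.subset_univ _, not_isBasis_of_dvd hp fun x hx => not_not.mp hx.2, fun Q hQ hnb => ?_⟩
  · exact hn ⟨[n], rfl, fun _ _ => Set.mem_univ _, List.sum_singleton⟩
  · refine hQ.antisymm fun a ha => ?_
    by_contra haQ
    exact hnb (isBasis_of_dvd_of_mem hp (fun x hx => ⟨Set.mem_univ x, fun hxQ => hQ hxQ hx⟩)
      ⟨Set.mem_univ a, haQ⟩ ha)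
end

section
/- Fix a positive integer k. For every ε > 0 there exists H such that for all integers h ≥ H, every asymptotic basis for ℕ₀ of order h contains at most (1+ε)·h essential subsets of cardinality at most k. (Equivalently, the maximal number φ(k,h) of essential subsets of size at most k in a basis of order h satisfies φ(k,h) ≤ (1+o(1))h as h → ∞ with k fixed.) -/
lemma sumset_zero_mem {B : Set ℕ} : 0 ∈ Sumset B 0 := ⟨[], by simp⟩

lemma sumset_add {B : Set ℕ} {m n x y : ℕ} (hx : x ∈ Sumset B m) (hy : y ∈ Sumset B n) :
    x + y ∈ Sumset B (m + n) := by
  obtain ⟨l, rfl, hl, rfl⟩ := hx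
  obtain ⟨l', rfl, hl', rfl⟩ := hy
  refine ⟨l ++ l', by simp, ?_, by simp⟩
  intro x hx
  rcases List.mem_append.1 hx with h | h
  exacts [hl x h, hl' x h]

lemma sumset_one {B : Set ℕ} {x : ℕ} (hx : x ∈ B) : x ∈ Sumset B 1 := ⟨[x], by simp [hx]⟩

lemma sumset_mono {B : Set ℕ} (h0 : 0 ∈ B) {m n x : ℕ} (hmn : m ≤ n) (hx : x ∈ Sumset B m) :
    x ∈ Sumset B n := by
  induction n, hmn using Nat.le_induction with
  | base => exact hx
  | succ n _ ih => exact sumset_add ih (sumset_one h0)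

lemma dvd_of_mem_sumset {B : Set ℕ} {q h x : ℕ} (hB : ∀ b ∈ B, q ∣ b) (hx : x ∈ Sumset B h) :
    q ∣ x := by
  obtain ⟨l, -, hl, rfl⟩ := hx
  exact List.dvd_sum fun b hb => hB b (hl b hb)

lemma not_isBasis_of_dvd_s13 {B : Set ℕ} {q : ℕ} (hq : q.Prime) (hB : ∀ b ∈ B, q ∣ b) :
    ¬ IsBasis B := by
  rintro ⟨h, -, -, hfin⟩
  obtain ⟨N, hN⟩ := hfin.bddAbove
  have key : q * (N + 1) + 1 ∈ Sumset B h := by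
    by_contra hc
    have := hN hc
    nlinarith [hq.two_le]
  have h1 := (Nat.dvd_add_right (Dvd.intro _ rfl)).1 (dvd_of_mem_sumset hB key)
  exact hq.one_lt.ne' (Nat.dvd_one.1 h1)

/-- Deleting a set of elements bounded by `m` changes an element of a sumset by a bounded amount. -/
lemma exists_add_of_list {A P : Set ℕ} (h0 : 0 ∈ A \ P) {m : ℕ} (hm : ∀ p ∈ P, p ≤ m) (l : List ℕ)
    (hl : ∀ x ∈ l, x ∈ A) :
    ∃ b t, b ∈ Sumset (A \ P) l.length ∧ t ≤ l.length * m ∧ l.sum = b + t := by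
  induction l with
  | nil => exact ⟨0, 0, sumset_zero_mem, by simp, by simp⟩
  | cons a l ih =>
    obtain ⟨b, t, hb, ht, hs⟩ := ih fun x hx => hl x (List.mem_cons_of_mem _ hx)
    have ha : a ∈ A := hl a List.mem_cons_self
    by_cases haP : a ∈ P
    · refine ⟨b, t + a, sumset_mono h0 (Nat.le_succ _) hb, ?_, ?_⟩
      · have := hm a haP
        rw [List.length_cons, Nat.succ_mul]
        omega
      · rw [List.sum_cons, hs]
        omega
    · refine ⟨b + a, t, sumset_add hb (sumset_one ⟨ha, haP⟩), ?_, ?_⟩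
      · rw [List.length_cons, Nat.succ_mul]
        omega
      · rw [List.sum_cons, hs]
        omega

lemma exists_sumset_of_mem_closure {B : Set ℕ} {x : ℕ} (hx : x ∈ AddSubmonoid.closure B) :
    ∃ m, x ∈ Sumset B m := by
  obtain ⟨l, hl, hs⟩ := AddSubmonoid.exists_list_of_mem_closure hx
  exact ⟨l.length, l, rfl, hl, hs⟩

/-- If deleting a finite set avoiding `0` destroys the basis property, the obstruction is a prime
dividing every remaining element. -/
lemma exists_prime_dvd_of_not_isBasis {A P : Set ℕ} {h : ℕ} (hA : IsBasisOfOrder A h)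
    (hP : P.Finite) (h0P : 0 ∉ P) (hnot : ¬ IsBasis (A \ P)) :
    ∃ q : ℕ, q.Prime ∧ ∀ a ∈ A \ P, q ∣ a := by
  by_contra hcon
  have hgcd : Nat.setGcd (A \ P) = 1 := by
    by_contra hne
    obtain ⟨q, hq, hqd⟩ := Nat.exists_prime_and_dvd hne
    exact hcon ⟨q, hq, Nat.dvd_setGcd_iff.1 hqd⟩
  apply hnot
  obtain ⟨h0A, h1, hfin⟩ := hA
  have h0 : 0 ∈ A \ P := ⟨h0A, h0P⟩
  obtain ⟨m, hm⟩ := hP.bddAbove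
  obtain ⟨N, hN⟩ := Nat.exists_mem_closure_of_ge (A \ P)
  obtain ⟨K, hK⟩ := hfin.bddAbove
  have hrep : ∀ t, ∃ r, N + t ∈ Sumset (A \ P) r := fun t =>
    exists_sumset_of_mem_closure (hN _ (Nat.le_add_right _ _) (hgcd ▸ one_dvd _))
  choose r hr using hrep
  -- `R` summands from `A \ P` suffice for every integer of the block `[N, N + h * m]`.
  let R := (Finset.range (h * m + 1)).sup r
  refine ⟨h + R, h0, by omega, (Set.finite_le_nat (N + K)).subset ?_⟩
  intro n hn
  by_contra hlt
  have hlt' : N + K < n := not_le.1 hlt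
  have hmem : n - N ∈ Sumset A h := by
    by_contra hc
    have := hK hc
    omega
  obtain ⟨l, hlen, hl, hs⟩ := hmem
  obtain ⟨b, t, hb, ht, hbt⟩ := exists_add_of_list h0 (fun p hp => hm hp) l hl
  rw [hlen] at hb ht
  have hR : N + t ∈ Sumset (A \ P) R :=
    sumset_mono h0 (Finset.le_sup (f := r) (Finset.mem_range.2 (by omega))) (hr t)
  apply hn
  have : n = b + (N + t) := by omega
  rw [this]
  exact sumset_add hb hR

/-- An essential subset other than `{0}` consists of the elements of `A` prime to some prime. -/
lemma exists_prime_eq_of_isEssentialSubset {A P : Set ℕ} {h : ℕ} (hA : IsBasisOfOrder A h)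
    (hP : IsEssentialSubset A P) (hne : P ≠ {0}) :
    ∃ q : ℕ, q.Prime ∧ P = {a ∈ A | ¬ q ∣ a} := by
  obtain ⟨⟨-, hnot, hmin⟩, hfin⟩ := hP
  have h0 : 0 ∉ P := by
    intro h0
    refine hne (hmin {0} (by simpa using h0) ?_).symm
    rintro ⟨_, h, -⟩
    exact h.2 rfl
  obtain ⟨q, hq, hdvd⟩ := exists_prime_dvd_of_not_isBasis hA hfin h0 hnot
  refine ⟨q, hq, (hmin _ ?_ (not_isBasis_of_dvd_s13 hq ?_)).symm⟩
  · rintro a ⟨haA, hqa⟩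
    by_contra haP
    exact hqa (hdvd a ⟨haA, haP⟩)
  · rintro a ⟨haA, ha⟩
    by_contra hqa
    exact ha ⟨haA, hqa⟩

lemma factorial_card_le_prod (n : ℕ) :
    ∀ S : Finset ℕ, S.card = n → (∀ x ∈ S, 0 < x) → n.factorial ≤ ∏ x ∈ S, x := by
  induction n with
  | zero =>
    intro S hS _
    simp [Finset.card_eq_zero.1 hS]
  | succ n ih =>
    intro S hS hpos
    have hne : S.Nonempty := Finset.card_pos.1 (by omega)
    have hmax : n + 1 ≤ S.max' hne := by
      have hsub : S ⊆ Finset.Icc 1 (S.max' hne) := fun x hx =>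
        Finset.mem_Icc.2 ⟨hpos x hx, S.le_max' x hx⟩
      have := Finset.card_le_card hsub
      rw [hS, Nat.card_Icc] at this
      omega
    have hmem := S.max'_mem hne
    rw [← Finset.mul_prod_erase S _ hmem, Nat.factorial_succ]
    refine Nat.mul_le_mul hmax (ih _ ?_ fun x hx => hpos x (Finset.mem_of_mem_erase hx))
    rw [Finset.card_erase_of_mem hmem, hS]
    rfl

/-- If `A` is a basis of order `h` and all but `c` of its elements vanish modulo `M`, then
`M ≤ 2 ^ (c + h)`: each of the `M` residue classes is the sum of a multiset of size `h` from a set of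
at most `c + 1` elements, and there are at most `(c + h).choose h` such multisets. -/
lemma modulus_le_two_pow {A : Set ℕ} {h M : ℕ} (hA : IsBasisOfOrder A h) (hM : 0 < M)
    (E : Finset ℕ) (hE : ∀ a ∈ A, a ∉ E → M ∣ a) :
    M ≤ 2 ^ (E.card + h) := by
  classical
  have : NeZero M := ⟨hM.ne'⟩
  obtain ⟨-, -, hfin⟩ := hA
  obtain ⟨K, hK⟩ := hfin.bddAbove
  let F := insert 0 E
  let f : Sym F h → ZMod M := fun s => (s.1.map fun x : F => ((x : ℕ) : ZMod M)).sum
  have hf : Function.Surjective f := by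
    intro r
    have hmem : r.val + M * (K + 1) ∈ Sumset A h := by
      by_contra hc
      have := hK hc
      nlinarith
    obtain ⟨l, hlen, hl, hs⟩ := hmem
    let g : ℕ → F := fun x =>
      if hx : x ∈ E then ⟨x, Finset.mem_insert_of_mem hx⟩ else ⟨0, Finset.mem_insert_self _ _⟩
    have hg : ∀ x ∈ l, (((g x : F) : ℕ) : ZMod M) = (x : ZMod M) := by
      intro x hx
      by_cases hxE : x ∈ E
      · simp [g, hxE]
      · simp only [g, hxE, dite_false, Nat.cast_zero]
        exact ((ZMod.natCast_eq_zero_iff _ _).2 (hE x (hl x hx) hxE)).symm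
    refine ⟨⟨(l.map g : List F), by simp [hlen]⟩, ?_⟩
    have h1 : f ⟨(l.map g : List F), by simp [hlen]⟩
        = (l.map fun x => (((g x : F) : ℕ) : ZMod M)).sum := by
      simp [f, Function.comp_def]
    rw [h1, List.map_congr_left hg]
    rw [← Nat.cast_list_sum, hs]
    simp
  have hcard := Fintype.card_le_of_surjective f hf
  rw [ZMod.card, Sym.card_sym_eq_choose] at hcard
  refine hcard.trans ((Nat.choose_le_two_pow _ _).trans (Nat.pow_le_pow_right (by norm_num) ?_))
  have : F.card ≤ E.card + 1 := Finset.card_insert_le _ _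
  rw [Fintype.card_coe]
  omega

/-- The counting inequality: for `n` essential subsets of size at most `k` other than `{0}`, the
product of their
distinct primes is at least `n!` and at most the number of available sums. -/
lemma factorial_le_of_essential {A : Set ℕ} {h k : ℕ} (hA : IsBasisOfOrder A h)
    (Ps : Finset (Set ℕ)) (hPs : ∀ P ∈ Ps, (IsEssentialSubset A P ∧ P.ncard ≤ k) ∧ P ≠ {0}) :
    Ps.card.factorial ≤ 2 ^ (k * Ps.card + h) := by
  classical
  have hex : ∀ P : Set ℕ, ∃ q : ℕ, P ∈ Ps → q.Prime ∧ P = {a ∈ A | ¬ q ∣ a} := by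
    intro P
    by_cases hP : P ∈ Ps
    · obtain ⟨q, hq⟩ := exists_prime_eq_of_isEssentialSubset hA (hPs P hP).1.1 (hPs P hP).2
      exact ⟨q, fun _ => hq⟩
    · exact ⟨0, fun h => absurd h hP⟩
  choose q hq using hex
  have hinj : Set.InjOn q Ps := by
    intro P hP Q hQ hPQ
    rw [(hq P hP).2, (hq Q hQ).2, hPQ]
  let S := Ps.image q
  have hScard : S.card = Ps.card := Finset.card_image_of_injOn hinj
  have hSprime : ∀ p ∈ S, p.Prime := by
    intro p hp
    obtain ⟨P, hP, rfl⟩ := Finset.mem_image.1 hp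
    exact (hq P hP).1
  let E : Finset ℕ := Ps.biUnion fun P => if hP : P.Finite then hP.toFinset else ∅
  have hEcard : E.card ≤ k * Ps.card := by
    rw [mul_comm]
    refine Finset.card_biUnion_le_card_mul _ _ _ fun P hP => ?_
    have hfin : P.Finite := (hPs P hP).1.1.2
    rw [dif_pos hfin, ← Set.ncard_eq_toFinset_card P hfin]
    exact (hPs P hP).1.2
  have hM : 0 < ∏ p ∈ S, p := Finset.prod_pos fun p hp => (hSprime p hp).pos
  have hE : ∀ a ∈ A, a ∉ E → (∏ p ∈ S, p) ∣ a := by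
    intro a ha haE
    refine Finset.prod_primes_dvd a (fun p hp => (hSprime p hp).prime) fun p hp => ?_
    obtain ⟨P, hP, rfl⟩ := Finset.mem_image.1 hp
    by_contra hndvd
    have haP : a ∈ P := by
      rw [(hq P hP).2]
      exact ⟨ha, hndvd⟩
    have hfin : P.Finite := (hPs P hP).1.1.2
    refine haE (Finset.mem_biUnion.2 ⟨P, hP, ?_⟩)
    rw [dif_pos hfin]
    exact hfin.mem_toFinset.2 haP
  calc Ps.card.factorial ≤ ∏ p ∈ S, p :=
        factorial_card_le_prod _ S hScard fun p hp => (hSprime p hp).pos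
    _ ≤ 2 ^ (E.card + h) := modulus_le_two_pow hA hM E hE
    _ ≤ 2 ^ (k * Ps.card + h) := Nat.pow_le_pow_right (by norm_num) (by omega)

/-- With `k` fixed, the number of essential subsets of size at most `k` in a basis of
order `h` is at most `(1+o(1))·h` as `h → ∞`. -/
theorem essential_subsets_count_linear_in_order (k : ℕ) (hk : 0 < k) :
    ∀ ε : ℝ, 0 < ε → ∃ H : ℕ, ∀ h : ℕ, H ≤ h →
      ∀ A : Set ℕ, IsBasisOfOrder A h →
        ∀ Ps : Finset (Set ℕ), (∀ P ∈ Ps, IsEssentialSubset A P ∧ P.ncard ≤ k) →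
          (Ps.card : ℝ) ≤ (1 + ε) * h := by
  classical
  intro ε hε
  obtain ⟨N, hN⟩ := Filter.eventually_atTop.1
    ((FloorSemiring.tendsto_pow_div_factorial_atTop ((2 : ℝ) ^ (k + 1))).eventually
      (gt_mem_nhds zero_lt_one))
  obtain ⟨L, hL⟩ := exists_nat_ge (1 / ε)
  refine ⟨max N L, fun h hh A hA Ps hPs => ?_⟩
  have hcard : (Ps.erase {0}).card ≤ h := by
    by_contra! hlt
    set n := (Ps.erase {0}).card with hn
    have h1 : n.factorial ≤ 2 ^ (k * n + h) :=
      factorial_le_of_essential hA (Ps.erase {0}) fun P hP =>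
        ⟨hPs P (Finset.mem_of_mem_erase hP), Finset.ne_of_mem_erase hP⟩
    have h2 : n.factorial ≤ (2 ^ (k + 1)) ^ n := by
      refine h1.trans ?_
      rw [← pow_mul]
      exact Nat.pow_le_pow_right (by norm_num) (by rw [Nat.succ_mul]; omega)
    have h3 := hN n (by omega)
    rw [div_lt_one (by exact_mod_cast n.factorial_pos)] at h3
    exact absurd h3 (not_lt.2 (by exact_mod_cast h2))
  have hle : Ps.card ≤ h + 1 := by
    have := Finset.pred_card_le_card_erase (s := Ps) (a := {0})
    omega
  have hεh : 1 ≤ ε * h := by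
    have hLh : (L : ℝ) ≤ h := by exact_mod_cast (le_max_right N L).trans hh
    have := (div_le_iff₀' hε).1 (hL.trans hLh)
    exact this
  have : (Ps.card : ℝ) ≤ h + 1 := by exact_mod_cast hle
  linarith
end
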